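/- Let C be an A-component of G_∞(H). Let C_{+1} be the set of all X ∈ G_∞(H) containing some element of C as a hyperplane, and C_{-1} the set of all X ∈ G_∞(H) which are a hyperplane in some element of C. Then C_{+1} and C_{-1} are A-components of G_∞(H). -/

import Mathlib

open Module Submodule Classical

variable {H : Type*} [NormedAddCommGroup H] [InnerProductSpace ℂ H] [CompleteSpace H]

/-- The orthogonal projection of `H` onto a closed subspace `K`, as a map `H →L[ℂ] H`
(defined to be `0` if `K` is not closed). -/
noncomputable def projCLM (K : Submodule ℂ H) : H →L[ℂ] H :=
  if h : IsClosed (K : Set H) then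
    haveI : CompleteSpace K := h.completeSpace_coe
    K.subtypeL.comp (orthogonalProjection K)
  else 0

/-- Two (closed) subspaces are compatible if their orthogonal projections commute. -/
def Compatible (K L : Submodule ℂ H) : Prop := Commute (projCLM K) (projCLM L)

/-- `W` is a subspace of `X` of finite codimension `n` in `X`. -/
def CodimIn (W X : Submodule ℂ H) (n : ℕ) : Prop :=
  W ≤ X ∧ FiniteDimensional ℂ (↥X ⧸ W.comap X.subtype) ∧
    finrank ℂ (↥X ⧸ W.comap X.subtype) = n

/-- `X` and `Y` are adjacent: `X ∩ Y` is a hyperplane in both `X` and `Y`. -/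
def Adjacent (X Y : Submodule ℂ H) : Prop :=
  CodimIn (X ⊓ Y) X 1 ∧ CodimIn (X ⊓ Y) Y 1

/-- `X` and `Y` are ortho-adjacent: adjacent and compatible. -/
def OrthoAdjacent (X Y : Submodule ℂ H) : Prop := Adjacent X Y ∧ Compatible X Y

/-- The Grassmannian `G_∞(H)` of closed subspaces of `H` whose dimension and
codimension both are infinite. -/
def Ginf : Set (Submodule ℂ H) :=
  {X | IsClosed (X : Set H) ∧ ¬FiniteDimensional ℂ X ∧ ¬FiniteDimensional ℂ Xᗮ}

/-- `X ∩ Y` has the same finite codimension in both `X` and `Y`. -/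
def SameFinCodim (X Y : Submodule ℂ H) : Prop :=
  ∃ n : ℕ, CodimIn (X ⊓ Y) X n ∧ CodimIn (X ⊓ Y) Y n

/-- An `A`-component of `G_∞(H)`: a set of elements pairwise at the same finite
codimension, maximal with respect to this property. -/
def IsAComponent (C : Set (Submodule ℂ H)) : Prop :=
  C ⊆ Ginf ∧ (∀ X ∈ C, ∀ Y ∈ C, SameFinCodim X Y) ∧
    ∀ D : Set (Submodule ℂ H), D ⊆ Ginf → (∀ X ∈ D, ∀ Y ∈ D, SameFinCodim X Y) →
      C ⊆ D → D = C

/-- The star `S(X)`: all closed subspaces of `H` containing `X` as a hyperplane. -/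
def starSet (X : Submodule ℂ H) : Set (Submodule ℂ H) :=
  {Y | IsClosed (Y : Set H) ∧ CodimIn X Y 1}

/-- The top `G¹(X)`: all closed hyperplanes of `X`. -/
def topSet (X : Submodule ℂ H) : Set (Submodule ℂ H) :=
  {M | IsClosed (M : Set H) ∧ CodimIn M X 1}

/-- The image `U(M)` of a subspace `M ⊆ X` under a linear isometry `U : X ≃ X'`,
viewed as a subspace of `H`. -/
def imL (X X' : Submodule ℂ H) (U : ↥X ≃ₗᵢ[ℂ] ↥X') (M : Submodule ℂ H) : Submodule ℂ H :=
  Submodule.map X'.subtype (Submodule.map U.toLinearEquiv.toLinearMap (M.comap X.subtype))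

/-- The image `U(M)` of a subspace `M ⊆ X` under a conjugate-linear isometry `U : X ≃ X'`,
viewed as a subspace of `H`. -/
def imC (X X' : Submodule ℂ H) (U : ↥X ≃ₗᵢ⋆[ℂ] ↥X') (M : Submodule ℂ H) : Submodule ℂ H :=
  Submodule.map X'.subtype (Submodule.map U.toLinearEquiv.toLinearMap (M.comap X.subtype))

/-- The Grassmannian `G_k(H)` of `k`-dimensional subspaces of `H`. -/
def Gk (k : ℕ) : Set (Submodule ℂ H) :=
  {X | FiniteDimensional ℂ X ∧ finrank ℂ X = k}

/-- The Grassmannian `G^k(H)` of closed subspaces of `H` of codimension `k`. -/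
def GCk (k : ℕ) : Set (Submodule ℂ H) :=
  {X | IsClosed (X : Set H) ∧ FiniteDimensional ℂ (H ⧸ X) ∧ finrank ℂ (H ⧸ X) = k}

/-!
Subspaces that are commensurable, in the sense that their intersection has finite codimension in
both, have a relative dimension `[X : Y] = dim (X / (X ∩ Y)) - dim (Y / (X ∩ Y)) ∈ ℤ`, which
is additive: `[X : Z] = [X : Y] + [Y : Z]`. Hence the `A`-components are the nonempty classes
`{X ∈ G_∞(H) | [X : X₀] = k}`, and an `A`-component containing `X₀` is the class `k = 0`. Every
element of `G_∞(H)` has a hyperplane in `G_∞(H)` and is a hyperplane of an element of `G_∞(H)`, so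
`C_{±1}` are the classes `k = ±1`, and these are nonempty.
-/

section Colength

variable {R M : Type*} [Ring R] [AddCommGroup M] [Module R M] {W V X Y Z : Submodule R M}

theorem submoduleOf_mono (X : Submodule R M) (hWV : W ≤ V) :
    W.submoduleOf X ≤ V.submoduleOf X := comap_mono hWV

theorem comap_inclusion_submoduleOf (W : Submodule R M) (hVX : V ≤ X) :
    comap (inclusion hVX) (W.submoduleOf X) = W.submoduleOf V := rfl

/-- The map `V / (W ∩ V) → X / (W ∩ X)` induced by an inclusion `V ≤ X`. -/
def quotientInclusion (W : Submodule R M) (hVX : V ≤ X) :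
    (V ⧸ W.submoduleOf V) →ₗ[R] X ⧸ W.submoduleOf X :=
  mapQ _ _ (inclusion hVX) (comap_inclusion_submoduleOf W hVX).ge

theorem quotientInclusion_injective (W : Submodule R M) (hVX : V ≤ X) :
    Function.Injective (quotientInclusion W hVX) := by
  rw [← LinearMap.ker_eq_bot, quotientInclusion, ker_mapQ, comap_inclusion_submoduleOf,
    mkQ_map_self]

theorem exact_quotientInclusion_factor (hWV : W ≤ V) (hVX : V ≤ X) :
    Function.Exact (quotientInclusion W hVX) (factor (submoduleOf_mono X hWV)) := by
  rw [LinearMap.exact_iff, ker_mapQ, quotientInclusion, range_mapQ, comap_id, range_inclusion]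
  rfl

theorem length_quotient_submoduleOf_eq_add (hWV : W ≤ V) (hVX : V ≤ X) :
    length R (X ⧸ W.submoduleOf X) =
      length R (V ⧸ W.submoduleOf V) + length R (X ⧸ V.submoduleOf X) :=
  length_eq_add_of_exact _ _ (quotientInclusion_injective W hVX) (factor_surjective _)
    (exact_quotientInclusion_factor hWV hVX)

/-- `W` is a submodule of `X` of finite colength `n`, i.e. `X / W` has length `n`. Over a field this
is the codimension of `W` in `X`. -/
def HasColength (W X : Submodule R M) (n : ℕ) : Prop :=
  W ≤ X ∧ length R (X ⧸ W.submoduleOf X) = n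

theorem hasColength_one_iff_covBy : HasColength W X 1 ↔ W ⋖ X := by
  refine ⟨fun ⟨hWX, hlen⟩ => ?_, fun h => ⟨h.le, ?_⟩⟩
  · exact (covBy_iff_quot_is_simple hWX).2 (length_eq_one_iff.1 (by exact_mod_cast hlen))
  · exact_mod_cast length_eq_one_iff.2 ((covBy_iff_quot_is_simple h.le).1 h)

namespace HasColength

variable {m n : ℕ}

theorem refl (X : Submodule R M) : HasColength X X 0 :=
  ⟨le_rfl, by simp⟩

theorem trans (hWV : HasColength W V m) (hVX : HasColength V X n) : HasColength W X (m + n) :=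
  ⟨hWV.1.trans hVX.1, by
    rw [length_quotient_submoduleOf_eq_add hWV.1 hVX.1, hWV.2, hVX.2, Nat.cast_add]⟩

theorem unique (hm : HasColength W X m) (hn : HasColength W X n) : m = n := by
  exact_mod_cast hm.2.symm.trans hn.2

theorem exists_eq_add (h : HasColength W X n) (hWV : W ≤ V) (hVX : V ≤ X) :
    ∃ a b, HasColength W V a ∧ HasColength V X b ∧ n = a + b := by
  have hsum := (length_quotient_submoduleOf_eq_add hWV hVX).symm.trans h.2
  obtain ⟨ha, hb⟩ := WithTop.add_ne_top.1 (hsum.trans_ne (ENat.natCast_ne_top n))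
  obtain ⟨a, ha⟩ := ENat.ne_top_iff_exists.1 ha
  obtain ⟨b, hb⟩ := ENat.ne_top_iff_exists.1 hb
  refine ⟨a, b, ⟨hWV, ha.symm⟩, ⟨hVX, hb.symm⟩, ?_⟩
  rw [← ha, ← hb] at hsum
  exact_mod_cast hsum.symm

theorem exists_inf (h : HasColength W X n) (hZX : Z ≤ X) : ∃ m, HasColength (W ⊓ Z) Z m := by
  have hle : length R (Z ⧸ W.submoduleOf Z) ≤ n :=
    h.2 ▸ length_le_of_injective _ (quotientInclusion_injective W hZX)
  obtain ⟨m, hm⟩ := ENat.ne_top_iff_exists.1 (ne_top_of_le_ne_top (ENat.natCast_ne_top n) hle)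
  have hinf : (W ⊓ Z).submoduleOf Z = W.submoduleOf Z := by simp [submoduleOf]
  exact ⟨m, inf_le_right, by rw [hinf, hm]⟩

end HasColength

/-- The relative length `[X : Y]`, the difference of the colengths of `X ⊓ Y` in `X` and in `Y`,
is defined and equal to `k`. Over a field this is the relative dimension of `X` and `Y`. -/
def HasRelLength (X Y : Submodule R M) (k : ℤ) : Prop :=
  ∃ a b : ℕ, HasColength (X ⊓ Y) X a ∧ HasColength (X ⊓ Y) Y b ∧ (a - b : ℤ) = k

theorem hasRelLength_of_hasColength {a b : ℕ} (hX : HasColength W X a) (hY : HasColength W Y b) :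
    HasRelLength X Y (a - b) := by
  have hW : W ≤ X ⊓ Y := le_inf hX.1 hY.1
  obtain ⟨c, a', hc, ha', hac⟩ := hX.exists_eq_add hW inf_le_left
  obtain ⟨d, b', hd, hb', hbd⟩ := hY.exists_eq_add hW inf_le_right
  have hcd := hc.unique hd
  exact ⟨a', b', ha', hb', by lia⟩

theorem HasColength.hasRelLength {n : ℕ} (h : HasColength W X n) : HasRelLength X W n := by
  simpa using hasRelLength_of_hasColength h (.refl W)

namespace HasRelLength

variable {k l : ℤ}

theorem symm (h : HasRelLength X Y k) : HasRelLength Y X (-k) := by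
  obtain ⟨a, b, ha, hb, rfl⟩ := h
  simpa using hasRelLength_of_hasColength hb ha

-- The colength of `X ⊓ Y ⊓ Z` in `Y` can be computed through `X ⊓ Y` and through `Y ⊓ Z`.
theorem trans (hXY : HasRelLength X Y k) (hYZ : HasRelLength Y Z l) :
    HasRelLength X Z (k + l) := by
  obtain ⟨a, b, ha, hb, rfl⟩ := hXY
  obtain ⟨c, d, hc, hd, rfl⟩ := hYZ
  obtain ⟨m, hm⟩ := hc.exists_inf hb.1
  obtain ⟨n, hn⟩ := hb.exists_inf hc.1
  rw [inf_comm] at hn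
  have hmn : m + b = n + c := (hm.trans hb).unique (hn.trans hc)
  convert hasRelLength_of_hasColength (hm.trans ha) (hn.trans hd) using 1
  lia

end HasRelLength

theorem exists_mem_ne_zero_of_not_finite (hX : ¬Module.Finite R X) : ∃ v ∈ X, v ≠ 0 :=
  exists_mem_ne_zero_of_ne_bot fun h => hX (h ▸ inferInstance)

end Colength

theorem length_eq_natCast_iff_finrank {K V : Type*} [DivisionRing K] [AddCommGroup V] [Module K V]
    {n : ℕ} : length K V = n ↔ FiniteDimensional K V ∧ finrank K V = n := by
  refine ⟨fun h => ?_, fun ⟨_, hn⟩ => hn ▸ length_eq_finrank K V⟩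
  have hrank : Module.rank K V = n := Cardinal.toENat_eq_natCast.1 (length_eq_rank K V ▸ h)
  exact ⟨rank_lt_aleph0_iff.1 (hrank ▸ Cardinal.natCast_lt_aleph0), finrank_eq_of_rank_eq hrank⟩

section Orthogonal

variable {𝕜 E : Type*} [RCLike 𝕜] [NormedAddCommGroup E] [InnerProductSpace 𝕜 E]
  {X : Submodule 𝕜 E} {v : E}

theorem span_singleton_sup_orthogonal_inf (hv : v ∈ X) : 𝕜 ∙ v ⊔ (𝕜 ∙ v)ᗮ ⊓ X = X :=
  sup_orthogonal_inf_of_hasOrthogonalProjection ((span_singleton_le_iff_mem v X).2 hv)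

theorem orthogonal_span_singleton_inf_covBy (hv : v ∈ X) (hv₀ : v ≠ 0) : (𝕜 ∙ v)ᗮ ⊓ X ⋖ X := by
  have hnot : v ∉ (𝕜 ∙ v)ᗮ ⊓ X := fun h =>
    hv₀ (inner_self_eq_zero.1 (mem_orthogonal_singleton_iff_inner_right.1 h.1))
  simpa only [span_singleton_sup_orthogonal_inf hv] using covBy_span_singleton_sup hnot

theorem covBy_span_singleton_sup_of_mem_orthogonal (hv : v ∈ Xᗮ) (hv₀ : v ≠ 0) :
    X ⋖ 𝕜 ∙ v ⊔ X :=
  covBy_span_singleton_sup fun hvX => hv₀ (inner_self_eq_zero.1 (hv v hvX))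

theorem not_finiteDimensional_orthogonal_span_singleton_inf (hX : ¬FiniteDimensional 𝕜 X)
    (hv : v ∈ X) : ¬FiniteDimensional 𝕜 ↥((𝕜 ∙ v)ᗮ ⊓ X) := fun _ =>
  hX (span_singleton_sup_orthogonal_inf hv ▸ finiteDimensional_sup (𝕜 ∙ v) ((𝕜 ∙ v)ᗮ ⊓ X))

end Orthogonal

section Grassmannian

variable {E : Type*} [NormedAddCommGroup E] [InnerProductSpace ℂ E]
  {X X₀ Y : Submodule ℂ E} {C : Set (Submodule ℂ E)} {k : ℤ}

theorem codimIn_iff_hasColength {W : Submodule ℂ E} {n : ℕ} :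
    CodimIn W X n ↔ HasColength W X n :=
  and_congr_right fun _ => length_eq_natCast_iff_finrank.symm

theorem codimIn_one_iff_covBy : CodimIn Y X 1 ↔ Y ⋖ X :=
  codimIn_iff_hasColength.trans hasColength_one_iff_covBy

theorem CodimIn.hasRelLength {n : ℕ} (h : CodimIn Y X n) : HasRelLength X Y n :=
  (codimIn_iff_hasColength.1 h).hasRelLength

theorem sameFinCodim_iff_hasRelLength_zero : SameFinCodim X Y ↔ HasRelLength X Y 0 := by
  simp only [SameFinCodim, HasRelLength, codimIn_iff_hasColength, sub_eq_zero, Nat.cast_inj]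
  exact ⟨fun ⟨n, hX, hY⟩ => ⟨n, n, hX, hY, rfl⟩, fun ⟨n, _, hX, hY, h⟩ => ⟨n, hX, h ▸ hY⟩⟩

theorem exists_mem_Ginf_codimIn_self (hX : X ∈ Ginf) : ∃ Y ∈ Ginf, CodimIn Y X 1 := by
  obtain ⟨hclosed, hdim, hcodim⟩ := hX
  obtain ⟨v, hv, hv₀⟩ := exists_mem_ne_zero_of_not_finite hdim
  refine ⟨(ℂ ∙ v)ᗮ ⊓ X, ⟨(isClosed_orthogonal _).inter hclosed,
    not_finiteDimensional_orthogonal_span_singleton_inf hdim hv, fun _ => ?_⟩,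
    codimIn_one_iff_covBy.2 (orthogonal_span_singleton_inf_covBy hv hv₀)⟩
  exact hcodim (finiteDimensional_of_le (orthogonal_le (inf_le_right (a := (ℂ ∙ v)ᗮ))))

theorem exists_mem_Ginf_self_codimIn (hX : X ∈ Ginf) : ∃ Y ∈ Ginf, CodimIn X Y 1 := by
  obtain ⟨hclosed, hdim, hcodim⟩ := hX
  obtain ⟨v, hv, hv₀⟩ := exists_mem_ne_zero_of_not_finite hcodim
  refine ⟨ℂ ∙ v ⊔ X, ⟨?_, fun _ => hdim (finiteDimensional_of_le (le_sup_right (a := ℂ ∙ v))), ?_⟩,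
    codimIn_one_iff_covBy.2 (covBy_span_singleton_sup_of_mem_orthogonal hv hv₀)⟩
  · exact sup_comm X (ℂ ∙ v) ▸ isClosed_sup_finiteDimensional X (ℂ ∙ v) hclosed
  · exact inf_orthogonal (ℂ ∙ v) X ▸
      not_finiteDimensional_orthogonal_span_singleton_inf hcodim hv

/-- The elements of `G_∞(E)` of relative dimension `k` over `X₀`. -/
def relDimClass (X₀ : Submodule ℂ E) (k : ℤ) : Set (Submodule ℂ E) :=
  {X | X ∈ Ginf ∧ HasRelLength X X₀ k}

theorem sameFinCodim_of_mem_relDimClass (hX : X ∈ relDimClass X₀ k)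
    (hY : Y ∈ relDimClass X₀ k) : SameFinCodim X Y := by
  rw [sameFinCodim_iff_hasRelLength_zero]
  simpa using hX.2.trans hY.2.symm

theorem isAComponent_relDimClass (hne : (relDimClass X₀ k).Nonempty) :
    IsAComponent (relDimClass X₀ k) := by
  obtain ⟨X₁, hX₁⟩ := hne
  refine ⟨fun X hX => hX.1, fun X hX Y hY => sameFinCodim_of_mem_relDimClass hX hY,
    fun D hD hpair hsub => Set.Subset.antisymm (fun Z hZ => ⟨hD hZ, ?_⟩) hsub⟩
  simpa using (sameFinCodim_iff_hasRelLength_zero.1 (hpair Z hZ X₁ (hsub hX₁))).trans hX₁.2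

theorem IsAComponent.eq_relDimClass_zero (hC : IsAComponent C) (hX₀ : X₀ ∈ C) :
    C = relDimClass X₀ 0 :=
  (hC.2.2 _ (fun _ hX => hX.1) (fun _ hX _ hY => sameFinCodim_of_mem_relDimClass hX hY)
    fun X hX => ⟨hC.1 hX, sameFinCodim_iff_hasRelLength_zero.1 (hC.2.1 X hX X₀ hX₀)⟩).symm

theorem setOf_exists_mem_relDimClass_codimIn (X₀ : Submodule ℂ E) (k : ℤ) :
    {X | X ∈ Ginf ∧ ∃ Y ∈ relDimClass X₀ k, CodimIn Y X 1} = relDimClass X₀ (k + 1) := by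
  ext X
  refine and_congr_right fun hX => ⟨fun ⟨Y, hY, hYX⟩ => ?_, fun h => ?_⟩
  · simpa [add_comm] using hYX.hasRelLength.trans hY.2
  · obtain ⟨Y, hY, hYX⟩ := exists_mem_Ginf_codimIn_self hX
    exact ⟨Y, ⟨hY, by simpa using hYX.hasRelLength.symm.trans h⟩, hYX⟩

theorem setOf_exists_codimIn_mem_relDimClass (X₀ : Submodule ℂ E) (k : ℤ) :
    {X | X ∈ Ginf ∧ ∃ Y ∈ relDimClass X₀ k, CodimIn X Y 1} = relDimClass X₀ (k - 1) := by
  ext X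
  refine and_congr_right fun hX => ⟨fun ⟨Y, hY, hXY⟩ => ?_, fun h => ?_⟩
  · simpa [sub_eq_neg_add] using hXY.hasRelLength.symm.trans hY.2
  · obtain ⟨Y, hY, hXY⟩ := exists_mem_Ginf_self_codimIn hX
    exact ⟨Y, ⟨hY, by simpa using hXY.hasRelLength.trans h⟩, hXY⟩

theorem relDimClass_add_one_nonempty (hne : (relDimClass X₀ k).Nonempty) :
    (relDimClass X₀ (k + 1)).Nonempty := by
  obtain ⟨X, hX⟩ := hne
  obtain ⟨Y, hY, hXY⟩ := exists_mem_Ginf_self_codimIn hX.1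
  exact ⟨Y, setOf_exists_mem_relDimClass_codimIn X₀ k ▸ ⟨hY, X, hX, hXY⟩⟩

theorem relDimClass_sub_one_nonempty (hne : (relDimClass X₀ k).Nonempty) :
    (relDimClass X₀ (k - 1)).Nonempty := by
  obtain ⟨X, hX⟩ := hne
  obtain ⟨Y, hY, hYX⟩ := exists_mem_Ginf_codimIn_self hX.1
  exact ⟨Y, setOf_exists_codimIn_mem_relDimClass X₀ k ▸ ⟨hY, X, hX, hYX⟩⟩

theorem stmt9_general (hC : IsAComponent C) :
    IsAComponent {X | X ∈ Ginf ∧ ∃ Y ∈ C, CodimIn Y X 1} ∧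
    IsAComponent {X | X ∈ Ginf ∧ ∃ Y ∈ C, CodimIn X Y 1} := by
  rcases C.eq_empty_or_nonempty with rfl | hne
  · simpa using hC
  · obtain ⟨X₀, hX₀⟩ := hne
    have hclass : C = relDimClass X₀ 0 := hC.eq_relDimClass_zero hX₀
    have hne₀ : (relDimClass X₀ 0).Nonempty := hclass ▸ ⟨X₀, hX₀⟩
    rw [hclass, setOf_exists_mem_relDimClass_codimIn, setOf_exists_codimIn_mem_relDimClass]
    exact ⟨isAComponent_relDimClass (relDimClass_add_one_nonempty hne₀),
      isAComponent_relDimClass (relDimClass_sub_one_nonempty hne₀)⟩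

end Grassmannian

/-- for an `A`-component `C` of `G_∞(H)`, the sets `C₊₁` (elements of `G_∞(H)`
containing some element of `C` as a hyperplane) and `C₋₁` (elements of `G_∞(H)` which are
hyperplanes in some element of `C`) are `A`-components of `G_∞(H)`. -/
theorem stmt9 (hH : ¬FiniteDimensional ℂ H)
    (C : Set (Submodule ℂ H)) (hC : IsAComponent C) :
    IsAComponent {X | X ∈ Ginf (H := H) ∧ ∃ Y ∈ C, CodimIn Y X 1} ∧
    IsAComponent {X | X ∈ Ginf (H := H) ∧ ∃ Y ∈ C, CodimIn X Y 1} :=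
  stmt9_general hC
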